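/- Let n ≥ 3, p ∈ (0,1), and let X₁,...,Xₙ be i.i.d. Bernoulli(p) random variables. Let D₁(X) = X₁ + X₂ + ... + X_{n-1} and P̂₁(X) = (X₁X₂ + X₂X₃ + ... + X_{n-1}Xₙ)/D₁(X). Then E[P̂₁(X) | D₁(X) ≠ 0] = p/(1 - (1-p)^{n-1}) + (p-1)/(n-1). -/

import Mathlib

/-- Probability weight of a Bernoulli(p) outcome. -/
def bw (p : ℝ) (b : Bool) : ℝ := if b then p else 1 - p

/-- The 0/1 real value of the `j`-th coordinate (0-based) of `x`, or `0` if out of range. -/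
def bval {n : ℕ} (x : Fin n → Bool) (j : ℕ) : ℝ :=
  if h : j < n then (if x ⟨j, h⟩ then 1 else 0) else 0

open Finset in
lemma hh_total (m : ℕ) (p : ℝ) : ∑ x : Fin m → Bool, ∏ i, bw p (x i) = 1 := by
  have h := Finset.prod_univ_sum (fun _ : Fin m => (Finset.univ : Finset Bool)) (fun _ b => bw p b)
  rw [Fintype.piFinset_univ] at h
  rw [← h]
  simp [bw]

/-- real value of a coordinate -/
def hv {m : ℕ} (x : Fin m → Bool) (i : Fin m) : ℝ := if x i then 1 else 0

/-- sum of coordinates -/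
def hD {m : ℕ} (x : Fin m → Bool) : ℝ := ∑ i, hv x i

/-- expectation -/
def hE {m : ℕ} (p : ℝ) (f : (Fin m → Bool) → ℝ) : ℝ := ∑ x : Fin m → Bool, (∏ i, bw p (x i)) * f x

lemma hE_sum {m : ℕ} (p : ℝ) {ι : Type} (s : Finset ι) (f : ι → (Fin m → Bool) → ℝ) :
    hE p (fun x => ∑ i ∈ s, f i x) = ∑ i ∈ s, hE p (f i) := by
  unfold hE
  rw [Finset.sum_comm]
  simp only [Finset.mul_sum]

lemma hE_sub {m : ℕ} (p : ℝ) (f g : (Fin m → Bool) → ℝ) :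
    hE p (fun x => f x - g x) = hE p f - hE p g := by
  unfold hE
  simp only [mul_sub, Finset.sum_sub_distrib]

lemma hE_v {m : ℕ} (p : ℝ) (i : Fin m) : hE p (fun x => hv x i) = p := by
  have h := Finset.prod_univ_sum (fun _ : Fin m => (Finset.univ : Finset Bool))
    (fun j b => bw p b * (if j = i then (if b then (1:ℝ) else 0) else 1))
  rw [Fintype.piFinset_univ] at h
  have h2 : hE p (fun x => hv x i) = ∑ x : Fin m → Bool, ∏ j, bw p (x j) *
      (if j = i then (if x j then (1:ℝ) else 0) else 1) := by
    unfold hE hv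
    refine Finset.sum_congr rfl fun x _ => ?_
    rw [Finset.prod_mul_distrib, Finset.prod_ite_eq' Finset.univ i]
    simp
  rw [h2, ← h, Finset.prod_eq_single i]
  · simp [bw]
  · intro j _ hj
    simp [hj, bw]
  · simp

lemma hD_zero {m : ℕ} (x : Fin m → Bool) : hD x = 0 ↔ x = fun _ => false := by
  unfold hD
  rw [Finset.sum_eq_zero_iff_of_nonneg (fun i _ => by unfold hv; split_ifs <;> norm_num)]
  simp [hv, funext_iff]

lemma hE_P (m : ℕ) (p : ℝ) :
    hE p (fun x : Fin m → Bool => if hD x ≠ 0 then 1 else 0) = 1 - (1 - p) ^ m := by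
  have h : (fun x : Fin m → Bool => if hD x ≠ 0 then (1:ℝ) else 0)
      = fun x => 1 - (if x = (fun _ => false) then 1 else 0) := by
    funext x
    by_cases hx : x = fun _ => false
    · rw [if_neg (not_not.2 ((hD_zero x).2 hx)), if_pos hx]; norm_num
    · simp [(hD_zero x), hx]
  rw [h, hE_sub]
  congr 1
  · simp [hE, hh_total]
  · simp [hE, bw]

lemma hE_perm {m : ℕ} (p : ℝ) (σ : Equiv.Perm (Fin m)) (f : (Fin m → Bool) → ℝ) :
    hE p (fun x => f (x ∘ σ)) = hE p f := by
  unfold hE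
  refine Fintype.sum_equiv (Equiv.arrowCongr σ.symm (Equiv.refl Bool)) _ _ fun x => ?_
  have : (Equiv.arrowCongr σ.symm (Equiv.refl Bool)) x = x ∘ σ := by
    funext i; simp [Equiv.arrowCongr]
  rw [this]
  congr 1
  exact (Equiv.prod_comp σ (fun i => bw p (x i))).symm

lemma hD_perm {m : ℕ} (σ : Equiv.Perm (Fin m)) (x : Fin m → Bool) : hD (x ∘ σ) = hD x :=
  Equiv.sum_comp σ (fun i => hv x i)

lemma hE_one {m : ℕ} (p : ℝ) (i j : Fin m) :
    hE p (fun x => hv x i / hD x) = hE p (fun x => hv x j / hD x) := by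
  rw [← hE_perm p (Equiv.swap i j) (fun x => hv x i / hD x)]
  simp only [hD_perm]
  simp [hv]

lemma hE_two {m : ℕ} (p : ℝ) (i j i' j' : Fin m) (h : i ≠ j) (h' : i' ≠ j') :
    hE p (fun x => hv x i * hv x j / hD x) = hE p (fun x => hv x i' * hv x j' / hD x) := by
  obtain ⟨σ, h1, h2⟩ : ∃ σ : Equiv.Perm (Fin m), σ i = i' ∧ σ j = j' := by
    refine ⟨(Equiv.swap i i').trans (Equiv.swap (Equiv.swap i i' j) j'), ?_, ?_⟩
    · simp only [Equiv.trans_apply, Equiv.swap_apply_left]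
      apply Equiv.swap_apply_of_ne_of_ne _ h'
      intro h3
      have := (Equiv.swap i i').injective ((Equiv.swap_apply_left i i').trans h3)
      exact h this
    · simp
  rw [← hE_perm p σ (fun x => hv x i * hv x j / hD x)]
  simp only [hD_perm]
  simp [hv, h1, h2]

lemma h_c {m : ℕ} (p : ℝ) (i : Fin m) :
    (m : ℝ) * hE p (fun x => hv x i / hD x) = 1 - (1 - p) ^ m := by
  rw [← hE_P]
  have : (fun x : Fin m → Bool => if hD x ≠ 0 then (1:ℝ) else 0)
      = fun x => ∑ j, hv x j / hD x := by
    funext x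
    rw [← Finset.sum_div]
    change _ = hD x / hD x
    by_cases hx : hD x = 0 <;> simp [hx]
  rw [this, hE_sum, Finset.sum_congr rfl (fun j _ => hE_one p j i)]
  simp

lemma h_a {m : ℕ} (p : ℝ) (i j : Fin m) (h : i ≠ j) :
    (m : ℝ) * (m - 1) * hE p (fun x => hv x i * hv x j / hD x)
      = m * p - (1 - (1 - p) ^ m) := by
  rw [← hE_P]
  have e1 : hE p (fun x : Fin m → Bool => hD x) = m * p := by
    unfold hD
    rw [hE_sum]
    simp [hE_v]
  rw [← e1, ← hE_sub]
  have : (fun x : Fin m → Bool => hD x - if hD x ≠ 0 then (1:ℝ) else 0)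
      = fun x => ∑ a, ∑ b ∈ Finset.univ.erase a, hv x a * hv x b / hD x := by
    funext x
    have e2 : ∀ a, ∑ b ∈ Finset.univ.erase a, hv x a * hv x b / hD x
        = hv x a * hD x / hD x - hv x a / hD x := by
      intro a
      rw [Finset.sum_erase_eq_sub (Finset.mem_univ a), ← Finset.sum_div, ← Finset.mul_sum]
      congr 2
      unfold hv; split_ifs <;> simp
    simp only [e2]
    rw [Finset.sum_sub_distrib, ← Finset.sum_div, ← Finset.sum_div, ← Finset.sum_mul]
    change _ = hD x * hD x / hD x - hD x / hD x
    by_cases hx : hD x = 0 <;> simp [hx]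
  rw [this, hE_sum]
  simp only [hE_sum]
  have e3 : ∀ a : Fin m, ∑ b ∈ Finset.univ.erase a, hE p (fun x => hv x a * hv x b / hD x)
      = (m - 1) * hE p (fun x => hv x i * hv x j / hD x) := by
    intro a
    rw [Finset.sum_congr rfl (fun b hb => hE_two p a b i j (Finset.ne_of_mem_erase hb).symm h)]
    rw [Finset.sum_const, Finset.card_erase_of_mem (Finset.mem_univ a)]
    have : 1 ≤ m := by have := a.2; omega
    simp [Nat.cast_sub this]
  simp only [e3]
  simp [mul_assoc]

lemma h_split {m : ℕ} (p : ℝ) (f : (Fin (m + 1) → Bool) → ℝ) :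
    (∑ x : Fin (m + 1) → Bool, (∏ i, bw p (x i)) * f x)
      = hE p (fun y : Fin m → Bool =>
          p * f (Fin.snoc (α := fun _ => Bool) y true)
            + (1 - p) * f (Fin.snoc (α := fun _ => Bool) y false)) := by
  rw [← Equiv.sum_comp (Fin.snocEquiv (fun _ : Fin (m + 1) => Bool)), Fintype.sum_prod_type]
  unfold hE
  rw [Fintype.sum_bool, ← Finset.sum_add_distrib]
  refine Finset.sum_congr rfl fun y _ => ?_
  simp [Fin.snocEquiv, Fin.prod_univ_castSucc, bw]
  ring

lemma bval_snoc {m : ℕ} (y : Fin m → Bool) (b : Bool) (j : Fin m) :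
    bval (Fin.snoc (α := fun _ => Bool) y b : Fin (m + 1) → Bool) j = hv y j := by
  have h : (j : ℕ) < m + 1 := by have := j.2; omega
  unfold bval hv
  rw [dif_pos h]
  have : (⟨j, h⟩ : Fin (m + 1)) = j.castSucc := rfl
  rw [this, Fin.snoc_castSucc]

lemma bval_last {m : ℕ} (y : Fin m → Bool) (b : Bool) :
    bval (Fin.snoc (α := fun _ => Bool) y b : Fin (m + 1) → Bool) m = if b then 1 else 0 := by
  unfold bval
  rw [dif_pos (Nat.lt_succ_self m)]
  have : (⟨m, Nat.lt_succ_self m⟩ : Fin (m + 1)) = Fin.last m := rfl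
  rw [this, Fin.snoc_last]

lemma bD_snoc {m : ℕ} (y : Fin m → Bool) (b : Bool) :
    ∑ j ∈ Finset.range m, bval (Fin.snoc (α := fun _ => Bool) y b : Fin (m + 1) → Bool) j
      = hD y := by
  rw [Finset.sum_range]
  simp only [bval_snoc, hD]

lemma bS_snoc {k : ℕ} (y : Fin (k + 1) → Bool) (b : Bool) :
    ∑ j ∈ Finset.range (k + 1),
      bval (Fin.snoc (α := fun _ => Bool) y b : Fin (k + 1 + 1) → Bool) j *
      bval (Fin.snoc (α := fun _ => Bool) y b : Fin (k + 1 + 1) → Bool) (j + 1)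
      = ∑ j : Fin k, hv y j.castSucc * hv y j.succ
        + hv y (Fin.last k) * (if b then 1 else 0) := by
  rw [Finset.sum_range_succ, bval_last, Finset.sum_range]
  have h1 := bval_snoc y b (Fin.last k)
  rw [Fin.val_last] at h1
  rw [h1]
  congr 1
  refine Finset.sum_congr rfl fun j _ => ?_
  have h2 := bval_snoc y b j.castSucc
  have h3 := bval_snoc y b j.succ
  rw [Fin.val_castSucc] at h2
  rw [Fin.val_succ] at h3
  rw [h2, h3]


/-- Expected hot hand statistic of streak length 1 for `n` i.i.d. Bernoulli(p) variables:
`E[P̂₁(X) | D₁(X) ≠ 0] = p/(1-(1-p)^(n-1)) + (p-1)/(n-1)`.  Expectations are written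
as sums over all outcomes `x : Fin n → Bool` weighted by the product Bernoulli mass. -/
theorem hot_hand_expectation (n : ℕ) (hn : 3 ≤ n) (p : ℝ) (hp0 : 0 < p) (hp1 : p < 1) :
    (∑ x : Fin n → Bool, (∏ i, bw p (x i)) *
        (if (∑ j ∈ Finset.range (n - 1), bval x j) ≠ 0 then
          (∑ j ∈ Finset.range (n - 1), bval x j * bval x (j + 1)) /
            (∑ j ∈ Finset.range (n - 1), bval x j)
        else 0)) /
      (∑ x : Fin n → Bool, (∏ i, bw p (x i)) *
        (if (∑ j ∈ Finset.range (n - 1), bval x j) ≠ 0 then 1 else 0))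
      = p / (1 - (1 - p) ^ (n - 1)) + (p - 1) / (n - 1) := by
  obtain ⟨k, rfl⟩ : ∃ k, n = k + 1 + 1 := ⟨n - 2, by omega⟩
  have hk : 1 ≤ k := by omega
  simp only [Nat.add_sub_cancel]
  rw [h_split, h_split]
  simp only [bD_snoc, bS_snoc, if_true, Bool.false_eq_true, if_false]
  have hden : hE p (fun y : Fin (k + 1) → Bool =>
      p * (if hD y ≠ 0 then (1:ℝ) else 0) + (1 - p) * (if hD y ≠ 0 then (1:ℝ) else 0))
      = 1 - (1 - p) ^ (k + 1) := by
    rw [← hE_P]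
    congr 1
    funext y
    ring
  rw [hden]
  let i0 : Fin k := ⟨0, hk⟩
  have ha := h_a p i0.castSucc i0.succ (Fin.castSucc_lt_succ).ne
  have hc := h_c p (Fin.last k)
  have hnum : (fun y : Fin (k + 1) → Bool =>
      p * (if hD y ≠ 0 then (∑ j : Fin k, hv y j.castSucc * hv y j.succ
        + hv y (Fin.last k) * 1) / hD y else 0)
      + (1 - p) * (if hD y ≠ 0 then (∑ j : Fin k, hv y j.castSucc * hv y j.succ
        + hv y (Fin.last k) * 0) / hD y else 0))
      = fun y => ∑ j : Fin k, hv y j.castSucc * hv y j.succ / hD y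
          - (-p) * (hv y (Fin.last k) / hD y) := by
    funext y
    rw [← Finset.sum_div]
    by_cases hy : hD y = 0
    · simp [hy]
    · simp [hy]
      ring
  have hmul : hE p (fun y : Fin (k + 1) → Bool => (-p) * (hv y (Fin.last k) / hD y))
      = (-p) * hE p (fun y : Fin (k + 1) → Bool => hv y (Fin.last k) / hD y) := by
    unfold hE
    rw [Finset.mul_sum]
    refine Finset.sum_congr rfl fun y _ => ?_
    ring
  rw [hnum, hE_sub, hE_sum, hmul, Finset.sum_congr rfl (fun j _ =>
    hE_two p j.castSucc j.succ i0.castSucc i0.succ (Fin.castSucc_lt_succ).ne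
      (Fin.castSucc_lt_succ).ne)]
  generalize hE p (fun x => hv x i0.castSucc * hv x i0.succ / hD x) = A at *
  generalize hE p (fun y : Fin (k + 1) → Bool => hv y (Fin.last k) / hD y) = c at *
  have hP : 1 - (1 - p) ^ (k + 1) ≠ 0 := by
    have : (1 - p) ^ (k + 1) < 1 := pow_lt_one₀ (by linarith) (by linarith) (by omega)
    linarith
  generalize 1 - (1 - p) ^ (k + 1) = P at *
  have hk0 : (k : ℝ) + 1 ≠ 0 := by positivity
  push_cast at *
  simp only [Finset.sum_const, Finset.card_univ, Fintype.card_fin, nsmul_eq_mul]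
  have e : (k : ℝ) + 1 + 1 - 1 = k + 1 := by ring
  rw [e]
  field_simp
  linear_combination ha + p * hc
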